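/- arXiv:1307.6825 — 3 statements merged into one kernel-verified Lean document; each statement's English description precedes it below -/
import Mathlib

section
/- Let x : [0, T) → ℝ be a solution of the sliding ODE x'(t) = -(1 + 2x(t)²)/(2(1 - x(t)²)) with x(0) = x₀ ∈ (0, √2/2), defined as long as x(t) ∈ (0, √2/2). Then x is strictly decreasing, x'(t) ≤ -1/2 whenever x(t) ∈ (0, √2/2), and there exists t* ∈ (0, 2x₀] with x(t*) = 0; that is, the sliding motion starting at any point of the sliding region reaches the tangency point p = (0,0) in finite time. -/
/- STATEMENT 12: let x : [0,T) → ℝ solve the sliding ODE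
x' = -(1 + 2x²)/(2(1 - x²)) with x(0) = x₀ ∈ (0, √2/2), the solution being
defined as long as x(t) ∈ (0, √2/2) (here: the ODE is imposed at the times
where x(t) ∈ (0, √2/2), x is continuous on [0,T) and 2x₀ < T, so that the
domain lasts at least until the exit time). Then x is strictly decreasing
(as long as it stays in (0, √2/2)), x'(t) ≤ -1/2 whenever x(t) ∈ (0, √2/2),
and there is t* ∈ (0, 2x₀] with x(t*) = 0: the sliding motion reaches the
tangency point p = (0,0) in finite time. -/
theorem sliding_motion_reaches_tangency_in_finite_time
    (T x₀ : ℝ) (x : ℝ → ℝ)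
    (hx0 : x 0 = x₀) (hx0pos : 0 < x₀) (hx0lt : x₀ < Real.sqrt 2 / 2)
    (hT : 2 * x₀ < T)
    (hcont : ContinuousOn x (Set.Ico 0 T))
    (hode : ∀ t ∈ Set.Ico 0 T, 0 < x t → x t < Real.sqrt 2 / 2 →
      HasDerivAt x (-(1 + 2 * x t ^ 2) / (2 * (1 - x t ^ 2))) t) :
    (∀ s t : ℝ, 0 ≤ s → s < t → t < T →
      (∀ u : ℝ, s < u → u < t → 0 < x u ∧ x u < Real.sqrt 2 / 2) →
      x t < x s) ∧
    (∀ t ∈ Set.Ico 0 T, 0 < x t → x t < Real.sqrt 2 / 2 →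
      -(1 + 2 * x t ^ 2) / (2 * (1 - x t ^ 2)) ≤ -(1 / 2)) ∧
    (∃ tstar ∈ Set.Ioc 0 (2 * x₀), x tstar = 0) := by
  have hsq : Real.sqrt 2 * Real.sqrt 2 = 2 := Real.mul_self_sqrt (by norm_num)
  have hlt : ∀ y : ℝ, 0 < y → y < Real.sqrt 2 / 2 →
      -(1 + 2 * y ^ 2) / (2 * (1 - y ^ 2)) < -(1 / 2) := by
    intro y h0 h1
    have h2 : y ^ 2 < 1 / 2 := by nlinarith
    have h3 : 0 < 2 * (1 - y ^ 2) := by linarith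
    rw [div_lt_iff₀ h3]
    nlinarith [pow_pos h0 2]
  have key : ∀ s t : ℝ, 0 ≤ s → s < t → t < T →
      (∀ u : ℝ, s < u → u < t → 0 < x u ∧ x u < Real.sqrt 2 / 2) →
      x t < x s - (t - s) / 2 := by
    intro s t hs hst ht h
    obtain ⟨c, hc, he⟩ := exists_hasDerivAt_eq_slope x
      (fun u => -(1 + 2 * x u ^ 2) / (2 * (1 - x u ^ 2))) hst
      (hcont.mono (fun u hu => ⟨hs.trans hu.1, hu.2.trans_lt ht⟩))
      (fun u hu => hode u ⟨hs.trans hu.1.le, hu.2.trans ht⟩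
        (h u hu.1 hu.2).1 (h u hu.1 hu.2).2)
    have h1 := hlt (x c) (h c hc.1 hc.2).1 (h c hc.1 hc.2).2
    rw [he, div_lt_iff₀ (by linarith)] at h1
    linarith
  refine ⟨fun s t hs hst ht h => ?_, fun t _ h0 h1 => (hlt _ h0 h1).le, ?_⟩
  · have := key s t hs hst ht h
    linarith
  by_contra hno
  push Not at hno
  have hc' : ContinuousOn x (Set.Icc 0 (2 * x₀)) :=
    hcont.mono (fun u hu => ⟨hu.1, hu.2.trans_lt hT⟩)
  have hpos : ∀ t ∈ Set.Icc 0 (2 * x₀), 0 < x t := by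
    intro t ht
    by_contra hn
    push Not at hn
    obtain ⟨c, hc, hxc⟩ := intermediate_value_Icc' ht.1
      (hc'.mono (Set.Icc_subset_Icc_right ht.2))
      (show (0 : ℝ) ∈ Set.Icc (x t) (x 0) from ⟨hn, by linarith⟩)
    rcases hc.1.eq_or_lt with h | h
    · rw [← h] at hxc
      linarith
    · exact hno c ⟨h, hc.2.trans ht.2⟩ hxc
  have hup : ∀ t ∈ Set.Icc 0 (2 * x₀), x t < Real.sqrt 2 / 2 := by
    by_contra hn
    push Not at hn
    obtain ⟨t, ht, hxt⟩ := hn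
    have hcl : IsClosed (Set.Icc 0 (2 * x₀) ∩ x ⁻¹' Set.Ici (Real.sqrt 2 / 2)) :=
      hc'.preimage_isClosed_of_isClosed isClosed_Icc isClosed_Ici
    have hK := isCompact_Icc.of_isClosed_subset hcl Set.inter_subset_left
    obtain ⟨m, ⟨hm, hxm⟩, hmin⟩ := hK.exists_isLeast ⟨t, ht, hxt⟩
    have hxm' : Real.sqrt 2 / 2 ≤ x m := hxm
    rcases hm.1.eq_or_lt with h | h
    · rw [← h] at hxm'
      linarith
    · have := key 0 m le_rfl h (hm.2.trans_lt hT) (fun u h0 h1 =>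
        ⟨hpos u ⟨h0.le, h1.le.trans hm.2⟩, by
          by_contra hcon
          push Not at hcon
          have := hmin ⟨⟨h0.le, h1.le.trans hm.2⟩, hcon⟩
          linarith⟩)
      linarith
  have h1 := key 0 (2 * x₀) le_rfl (by linarith) hT
    (fun u h0 h1 => ⟨hpos u ⟨h0.le, h1.le⟩, hup u ⟨h0.le, h1.le⟩⟩)
  have h2 := hpos (2 * x₀) ⟨by linarith, le_rfl⟩
  linarith
end

section
/- Let (x₀, y₀) ∈ ℝ² with -1 ≤ x₀ ≤ 1 and 0 ≤ y₀ ≤ 1 - x₀², and let γ(t) = (x₀ + t, x₀² + y₀ - (x₀ + t)²) be the X-solution through (x₀, y₀). Set t* = √(x₀² + y₀) - x₀ ≥ 0. Then γ(t*) = (√(x₀² + y₀), 0) with 0 ≤ √(x₀² + y₀) ≤ 1, the second coordinate of γ(t) is nonnegative for all t ∈ [0, t*], and γ(t) ∈ Λ = {(x,y) : -1 ≤ x ≤ 1, x⁴/2 - x²/2 ≤ y ≤ 1 - x²} for all t ∈ [0, t*]. That is, every forward X-trajectory starting in Λ ∩ {y ≥ 0} remains in Λ until it reaches the switching line Σ =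 {y = 0} in finite time, at a point with x-coordinate in [0, 1]. -/
/-- The region Λ of the Example. -/
def Λreg : Set (ℝ × ℝ) :=
  {p : ℝ × ℝ | -1 ≤ p.1 ∧ p.1 ≤ 1 ∧
    p.1 ^ 4 / 2 - p.1 ^ 2 / 2 ≤ p.2 ∧ p.2 ≤ 1 - p.1 ^ 2}

/-- The X-solution through `(x₀, y₀)`. -/
def γX (x₀ y₀ t : ℝ) : ℝ × ℝ := (x₀ + t, x₀ ^ 2 + y₀ - (x₀ + t) ^ 2)

/- STATEMENT 16: for (x₀,y₀) with -1 ≤ x₀ ≤ 1 and 0 ≤ y₀ ≤ 1 - x₀², the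
X-solution γ(t) = (x₀ + t, x₀² + y₀ - (x₀+t)²) through (x₀,y₀) satisfies, with
t* = √(x₀² + y₀) - x₀ ≥ 0: γ(t*) = (√(x₀² + y₀), 0) with 0 ≤ √(x₀² + y₀) ≤ 1,
the second coordinate of γ is ≥ 0 on [0, t*], and γ(t) ∈ Λ for all t ∈ [0, t*].
Every forward X-trajectory starting in Λ ∩ {y ≥ 0} stays in Λ until it reaches
Σ = {y = 0} in finite time, at a point with x-coordinate in [0,1]. -/
theorem forward_X_trajectories_stay_in_Lambda
    (x₀ y₀ : ℝ) (hx₁ : -1 ≤ x₀) (hx₂ : x₀ ≤ 1)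
    (hy₁ : 0 ≤ y₀) (hy₂ : y₀ ≤ 1 - x₀ ^ 2) :
    0 ≤ Real.sqrt (x₀ ^ 2 + y₀) - x₀ ∧
    γX x₀ y₀ (Real.sqrt (x₀ ^ 2 + y₀) - x₀) = (Real.sqrt (x₀ ^ 2 + y₀), 0) ∧
    0 ≤ Real.sqrt (x₀ ^ 2 + y₀) ∧
    Real.sqrt (x₀ ^ 2 + y₀) ≤ 1 ∧
    (∀ t ∈ Set.Icc 0 (Real.sqrt (x₀ ^ 2 + y₀) - x₀), 0 ≤ (γX x₀ y₀ t).2) ∧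
    (∀ t ∈ Set.Icc 0 (Real.sqrt (x₀ ^ 2 + y₀) - x₀), γX x₀ y₀ t ∈ Λreg) := by
  have h0 : 0 ≤ x₀ ^ 2 + y₀ := by positivity
  have hs0 := Real.sqrt_nonneg (x₀ ^ 2 + y₀)
  have hsq := Real.sq_sqrt h0
  have habs : |x₀| ≤ Real.sqrt (x₀ ^ 2 + y₀) := Real.abs_le_sqrt (by linarith)
  have hs1 : Real.sqrt (x₀ ^ 2 + y₀) ≤ 1 := Real.sqrt_le_one.mpr (by linarith)
  generalize Real.sqrt (x₀ ^ 2 + y₀) = s at *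
  obtain ⟨ha, hb⟩ := abs_le.mp habs
  have key : ∀ t ∈ Set.Icc 0 (s - x₀), (x₀ + t) ^ 2 ≤ x₀ ^ 2 + y₀ := by
    intro t ht
    rw [← hsq]
    exact sq_le_sq' (by linarith [ht.1]) (by linarith [ht.2])
  refine ⟨by linarith, ?_, hs0, hs1, ?_, ?_⟩
  · simp only [γX, Prod.mk.injEq]
    constructor
    · ring
    · rw [← hsq]; ring
  · intro t ht
    have := key t ht
    simp only [γX]
    linarith
  · intro t ht
    have h := key t ht
    have h1 : (x₀ + t) ^ 2 ≤ 1 := by linarith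
    simp only [γX, Λreg, Set.mem_setOf_eq]
    refine ⟨by linarith [ht.1], by linarith [ht.2], ?_, by linarith⟩
    nlinarith [mul_nonneg (sq_nonneg (x₀ + t)) (sub_nonneg.mpr h1)]
end

section
/- Let g(x) = x⁴/2 - x²/2 and let (x₀, y₀) ∈ ℝ² with -1 ≤ x₀ ≤ 1 and g(x₀) ≤ y₀ ≤ 0, and let γ(t) = (x₀ - 2t, g(x₀ - 2t) + y₀ - g(x₀)) be the Y-solution through (x₀, y₀). Then there exists t* ∈ [0, (x₀ + 1)/2] such that the second coordinate of γ(t*) is 0 (so γ(t*) ∈ Σ and its x-coordinate x₀ - 2t* lies in [-1, x₀]); moreover, taking t* to be the first such time, γ(t) ∈ Λ = {(x,y) : -1 ≤ x ≤ 1, x⁴/2 - x²/2 ≤ y ≤ 1 - x²} for all t ∈ [0, t*]. That is, every forward Y-trajectory starting in Λ ∩ {y ≤ 0} remains in Λ until it reaches the switching line Σ = {y = 0} in finite time. -/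
/-- `g(x) = x⁴/2 - x²/2`. -/
noncomputable def gq (x : ℝ) : ℝ := x ^ 4 / 2 - x ^ 2 / 2

/-- The Y-solution through `(x₀, y₀)`. -/
noncomputable def γY (x₀ y₀ t : ℝ) : ℝ × ℝ :=
  (x₀ - 2 * t, gq (x₀ - 2 * t) + y₀ - gq x₀)

/- STATEMENT 17: for (x₀,y₀) with -1 ≤ x₀ ≤ 1 and g(x₀) ≤ y₀ ≤ 0, the
Y-solution γ(t) = (x₀ - 2t, g(x₀-2t) + y₀ - g(x₀)) through (x₀,y₀) reaches
Σ = {y = 0} at a first time t* ∈ [0, (x₀+1)/2] (so the x-coordinate x₀ - 2t*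
of γ(t*) lies in [-1, x₀]), and γ(t) ∈ Λ for all t ∈ [0, t*]: every forward
Y-trajectory starting in Λ ∩ {y ≤ 0} remains in Λ until it reaches the
switching line in finite time. -/
theorem forward_Y_trajectories_stay_in_Lambda
    (x₀ y₀ : ℝ) (hx₁ : -1 ≤ x₀) (hx₂ : x₀ ≤ 1)
    (hy₁ : gq x₀ ≤ y₀) (hy₂ : y₀ ≤ 0) :
    ∃ tstar ∈ Set.Icc 0 ((x₀ + 1) / 2),
      (γY x₀ y₀ tstar).2 = 0 ∧
      -1 ≤ x₀ - 2 * tstar ∧ x₀ - 2 * tstar ≤ x₀ ∧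
      (∀ s ∈ Set.Ico 0 tstar, (γY x₀ y₀ s).2 ≠ 0) ∧
      (∀ t ∈ Set.Icc 0 tstar, γY x₀ y₀ t ∈ Λreg) := by
  have hcont : Continuous (fun t : ℝ => (γY x₀ y₀ t).2) := by
    simp only [γY, gq]; fun_prop
  have hf0 : (γY x₀ y₀ 0).2 ≤ 0 := by
    simp only [γY, gq] at *; norm_num; exact hy₂
  have hf1 : 0 ≤ (γY x₀ y₀ ((x₀ + 1) / 2)).2 := by
    have h : x₀ - 2 * ((x₀ + 1) / 2) = -1 := by ring
    simp only [γY, h]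
    have : gq (-1) = 0 := by norm_num [gq]
    linarith
  have hne : (Set.Icc 0 ((x₀ + 1) / 2) ∩ (fun t : ℝ => (γY x₀ y₀ t).2) ⁻¹' {0}).Nonempty := by
    obtain ⟨c, hc, hc0⟩ := intermediate_value_Icc (by linarith : (0:ℝ) ≤ (x₀ + 1) / 2)
      hcont.continuousOn (show (0:ℝ) ∈ _ from ⟨hf0, hf1⟩)
    exact ⟨c, hc, hc0⟩
  have hcomp : IsCompact (Set.Icc 0 ((x₀ + 1) / 2) ∩ (fun t : ℝ => (γY x₀ y₀ t).2) ⁻¹' {0}) :=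
    isCompact_Icc.inter_right (isClosed_singleton.preimage hcont)
  obtain ⟨T, ⟨hT, hT0⟩, hmin⟩ := hcomp.exists_isLeast hne
  have hT0' : (γY x₀ y₀ T).2 = 0 := hT0
  have hfirst : ∀ s ∈ Set.Ico 0 T, (γY x₀ y₀ s).2 ≠ 0 := by
    intro s hs h
    have := hmin ⟨⟨hs.1, hs.2.le.trans hT.2⟩, h⟩
    exact absurd hs.2 (not_lt.mpr this)
  refine ⟨T, hT, hT0', by linarith [hT.2], by linarith [hT.1], hfirst, ?_⟩
  intro t ht
  have hle : (γY x₀ y₀ t).2 ≤ 0 := by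
    by_contra hpos
    push Not at hpos
    obtain ⟨c, hc, hc0⟩ := intermediate_value_Icc ht.1
      hcont.continuousOn (show (0:ℝ) ∈ _ from ⟨hf0, hpos.le⟩)
    have hc0' : (γY x₀ y₀ c).2 = 0 := hc0
    rcases hc.2.lt_or_eq with h | h
    · exact hfirst c ⟨hc.1, h.trans_le ht.2⟩ hc0'
    · rw [h] at hc0'; linarith
  have h1 : -1 ≤ x₀ - 2 * t := by linarith [hT.2, ht.2]
  have h2 : x₀ - 2 * t ≤ 1 := by linarith [ht.1]
  refine ⟨h1, h2, ?_, hle.trans ?_⟩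
  · change gq (x₀ - 2 * t) ≤ gq (x₀ - 2 * t) + y₀ - gq x₀
    linarith
  · change 0 ≤ 1 - (x₀ - 2 * t) ^ 2
    nlinarith
end
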